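/- arXiv:2012.11493 — 10 statements merged into one kernel-verified Lean document; each statement's English description precedes it below -/
import Mathlib

section
/- Let α ∈ (−1,1) and let w : (α,1) → ℝ be integrable. Suppose that for each nonnegative integer k, (r_{l,k})_{l≥0} is a sequence of real polynomials such that ∫_α^1 r_{l,k}(z) r_{l',k}(z) (1−z²)^k w(z) dz = 0 whenever l ≠ l'. Define, for integers 0 ≤ k ≤ n and admissible i, the function Q_{n,k,i}(θ,z) := r_{n−k,k}(z) · (1−z²)^{k/2} · Y_{k,i}(θ) on [0,2π] × (α,1). Then for any two index triples (n,k,i) ≠ (m,j,h) with 0 ≤ k ≤ n, 0 ≤ j ≤ m, i ∈ {0} if k = 0 and i ∈ {0,1} if k ≥ 1, h ∈ {0} if j = 0 and h ∈ {0,1} if j ≥ 1, one has ∫_α^1 ∫_0^{2π} Q_{n,k,i}(θ,z) · Q_{m,j,h}(θ,z) · w(z) dθ dz = 0. -/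
open MeasureTheory Real Polynomial

/-- The circular harmonics: `Y 0 _ θ = √2/2`, `Y k 0 θ = cos (k θ)`, `Y k 1 θ = sin (k θ)`. -/
noncomputable def circY (k i : ℕ) (θ : ℝ) : ℝ :=
  if k = 0 then Real.sqrt 2 / 2
  else if i = 0 then Real.cos (k * θ) else Real.sin (k * θ)

lemma int_cos_zero (a : ℤ) (ha : a ≠ 0) : ∫ θ in (0:ℝ)..(2 * π), Real.cos (a * θ) = 0 := by
  have ha' : (a : ℝ) ≠ 0 := by exact_mod_cast ha
  rw [intervalIntegral.integral_comp_mul_left (fun x => Real.cos x) ha', integral_cos]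
  have : Real.sin ((a : ℝ) * (2 * π)) = 0 := by
    have := Real.sin_int_mul_pi (2 * a)
    rw [← this]; push_cast; ring_nf
  simp [this]

lemma int_sin_zero (a : ℤ) : ∫ θ in (0:ℝ)..(2 * π), Real.sin (a * θ) = 0 := by
  by_cases ha : a = 0
  · simp [ha]
  have ha' : (a : ℝ) ≠ 0 := by exact_mod_cast ha
  rw [intervalIntegral.integral_comp_mul_left (fun x => Real.sin x) ha', integral_sin]
  simp [Real.cos_int_mul_two_pi]

lemma int_sin_cos (k j : ℕ) :
    ∫ θ in (0:ℝ)..(2 * π), Real.sin (k * θ) * Real.cos (j * θ) = 0 := by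
  have e : ∀ θ : ℝ, Real.sin (k * θ) * Real.cos (j * θ) =
      (Real.sin (((k + j : ℤ) : ℝ) * θ) + Real.sin (((k - j : ℤ) : ℝ) * θ)) * (1 / 2) := by
    intro θ
    push_cast
    rw [add_mul (k : ℝ) j θ, sub_mul (k : ℝ) j θ, Real.sin_add, Real.sin_sub]; ring
  simp_rw [e]
  rw [intervalIntegral.integral_mul_const, intervalIntegral.integral_add, int_sin_zero,
    int_sin_zero]
  · simp
  all_goals exact Continuous.intervalIntegrable (by fun_prop) _ _

lemma int_cos_cos (k j : ℕ) (hkj : k ≠ j) :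
    ∫ θ in (0:ℝ)..(2 * π), Real.cos (k * θ) * Real.cos (j * θ) = 0 := by
  have e : ∀ θ : ℝ, Real.cos (k * θ) * Real.cos (j * θ) =
      (Real.cos (((k + j : ℤ) : ℝ) * θ) + Real.cos (((k - j : ℤ) : ℝ) * θ)) * (1 / 2) := by
    intro θ
    push_cast
    rw [add_mul (k : ℝ) j θ, sub_mul (k : ℝ) j θ, Real.cos_add, Real.cos_sub]; ring
  simp_rw [e]
  rw [intervalIntegral.integral_mul_const, intervalIntegral.integral_add,
    int_cos_zero _ (by omega), int_cos_zero _ (by omega)]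
  · simp
  all_goals exact Continuous.intervalIntegrable (by fun_prop) _ _

lemma int_sin_sin (k j : ℕ) (hkj : k ≠ j) :
    ∫ θ in (0:ℝ)..(2 * π), Real.sin (k * θ) * Real.sin (j * θ) = 0 := by
  have e : ∀ θ : ℝ, Real.sin (k * θ) * Real.sin (j * θ) =
      (Real.cos (((k - j : ℤ) : ℝ) * θ) - Real.cos (((k + j : ℤ) : ℝ) * θ)) * (1 / 2) := by
    intro θ
    push_cast
    rw [add_mul (k : ℝ) j θ, sub_mul (k : ℝ) j θ, Real.cos_add, Real.cos_sub]; ring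
  simp_rw [e]
  rw [intervalIntegral.integral_mul_const, intervalIntegral.integral_sub,
    int_cos_zero _ (by omega), int_cos_zero _ (by omega)]
  · simp
  all_goals exact Continuous.intervalIntegrable (by fun_prop) _ _

/-- A harmonic is a multiple of a cosine or (when the second index is nonzero) of a sine. -/
lemma circY_form (k i : ℕ) (hi0 : k = 0 → i = 0) :
    ∃ c : ℝ, ∀ θ, circY k i θ =
      c * (if i = 0 then Real.cos (k * θ) else Real.sin (k * θ)) := by
  by_cases hk : k = 0
  · refine ⟨Real.sqrt 2 / 2, fun θ => ?_⟩
    simp [circY, hk, hi0 hk]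
  · refine ⟨1, fun θ => ?_⟩
    simp [circY, hk]

lemma circY_orth (k i j h : ℕ) (hi : i ≤ 1) (hi0 : k = 0 → i = 0) (hh : h ≤ 1)
    (hh0 : j = 0 → h = 0) (hne : ¬ (k = j ∧ i = h)) :
    ∫ θ in (0:ℝ)..(2 * π), circY k i θ * circY j h θ = 0 := by
  obtain ⟨c, hc⟩ := circY_form k i hi0
  obtain ⟨d, hd⟩ := circY_form j h hh0
  simp_rw [hc, hd, mul_mul_mul_comm c]
  rw [intervalIntegral.integral_const_mul]
  have hi' : i = 0 ∨ i = 1 := by omega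
  have hh' : h = 0 ∨ h = 1 := by omega
  rcases hi' with rfl | rfl <;> rcases hh' with rfl | rfl
  · simp [int_cos_cos k j (by simpa using hne)]
  · simp [mul_comm (Real.cos _), int_sin_cos]
  · simp [int_sin_cos]
  · simp [int_sin_sin k j (by simpa using hne)]

/-- Orthogonality of the spherical-cap orthogonal polynomials
 built from 1D polynomials 
orthogonal with respect to  on . -/
theorem sphericalCap_OP_orthogonal (α : ℝ) (hα : α ∈ Set.Ioo (-1 : ℝ) 1)
    (w : ℝ → ℝ) (hw : IntegrableOn w (Set.Ioo α 1))
    (r : ℕ → ℕ → Polynomial ℝ)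
    (hr : ∀ k l l', l ≠ l' →
      ∫ z in α..1, (r l k).eval z * (r l' k).eval z * (1 - z ^ 2) ^ k * w z = 0)
    (n k i m j h : ℕ) (hkn : k ≤ n) (hjm : j ≤ m)
    (hi : i ≤ 1) (hi0 : k = 0 → i = 0) (hh : h ≤ 1) (hh0 : j = 0 → h = 0)
    (hne : (n, k, i) ≠ (m, j, h)) :
    ∫ z in α..1,
      (∫ θ in (0:ℝ)..(2 * π),
        ((r (n - k) k).eval z * (1 - z ^ 2) ^ ((k : ℝ) / 2) * circY k i θ) *
        ((r (m - j) j).eval z * (1 - z ^ 2) ^ ((j : ℝ) / 2) * circY j h θ)) * w z = 0 := by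
  have key : ∀ z : ℝ, (∫ θ in (0:ℝ)..(2 * π),
        ((r (n - k) k).eval z * (1 - z ^ 2) ^ ((k : ℝ) / 2) * circY k i θ) *
        ((r (m - j) j).eval z * (1 - z ^ 2) ^ ((j : ℝ) / 2) * circY j h θ)) =
      ((r (n - k) k).eval z * (1 - z ^ 2) ^ ((k : ℝ) / 2)) *
        ((r (m - j) j).eval z * (1 - z ^ 2) ^ ((j : ℝ) / 2)) *
        ∫ θ in (0:ℝ)..(2 * π), circY k i θ * circY j h θ := by
    intro z
    rw [← intervalIntegral.integral_const_mul]
    congr 1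
    ext θ
    ring
  simp_rw [key]
  by_cases hc : k = j ∧ i = h
  · obtain ⟨rfl, rfl⟩ := hc
    have hnm : n - k ≠ m - k := by
      intro h'
      apply hne
      have : n = m := by omega
      rw [this]
    set C := ∫ θ in (0:ℝ)..(2 * π), circY k i θ * circY k i θ
    have h0 := hr k (n - k) (m - k) hnm
    have : ∫ z in α..1, ((r (n - k) k).eval z * (1 - z ^ 2) ^ ((k : ℝ) / 2)) *
        ((r (m - k) k).eval z * (1 - z ^ 2) ^ ((k : ℝ) / 2)) * C * w z =
        ∫ z in α..1, C * ((r (n - k) k).eval z * (r (m - k) k).eval z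
          * (1 - z ^ 2) ^ k * w z) := by
      apply intervalIntegral.integral_congr
      intro z hz
      rw [Set.uIcc_of_le hα.2.le] at hz
      have hz0 : 0 ≤ 1 - z ^ 2 := by nlinarith [hz.1, hz.2, hα.1]
      have hp : (1 - z ^ 2) ^ ((k : ℝ) / 2) * (1 - z ^ 2) ^ ((k : ℝ) / 2) = (1 - z ^ 2) ^ k := by
        rw [← Real.rpow_add_of_nonneg hz0 (by positivity) (by positivity), add_halves,
          Real.rpow_natCast]
      simp only []
      rw [← hp]
      ring
    rw [this, intervalIntegral.integral_const_mul, h0, mul_zero]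
  · simp [circY_orth k i j h hi hi0 hh hh0 hc]
end

section
/- Let α ∈ (−1,1) and a ≥ 0 be real. Suppose that for each nonnegative integer k, (R_{k,l})_{l≥0} is a sequence of real polynomials with deg R_{k,l} = l and ∫_α^1 R_{k,l}(z) p(z) (z−α)^a (1−z²)^k dz = 0 for every polynomial p with deg p < l. Define Q_{n,k,i}(θ,z) := R_{k,n−k}(z) · (1−z²)^{k/2} · Y_{k,i}(θ). Then for index triples (n,k,i) and (m,j,h) (with 0 ≤ k ≤ n, 0 ≤ j ≤ m and admissible i, h), if h ≠ i, or j ∉ {k−1, k+1}, or |m − n| ≥ 2, one has ∫_α^1 ∫_0^{2π} √(1−z²) cos θ · Q_{n,k,i}(θ,z) · Q_{m,j,h}(θ,z) · (z−α)^a dθ dz = 0. (This is the sparsity of the Jacobi operator for multiplication by x = ρ(z) cos θ on the spherical cap.) -/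
open MeasureTheory Real Polynomial

lemma aux_cos (c : ℤ) (hc : c ≠ 0) : ∫ θ in (0:ℝ)..(2 * π), Real.cos (c * θ) = 0 := by
  have hc' : (c : ℝ) ≠ 0 := by exact_mod_cast hc
  rw [intervalIntegral.integral_comp_mul_left (fun x => Real.cos x) hc', integral_cos]
  have : Real.sin (c * (2 * π)) = 0 := by
    have := Real.sin_int_mul_pi (2 * c)
    push_cast at this
    rw [← this]; ring_nf
  simp [this]

lemma aux_sin (c : ℤ) : ∫ θ in (0:ℝ)..(2 * π), Real.sin (c * θ) = 0 := by
  by_cases hc : c = 0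
  · simp [hc]
  have hc' : (c : ℝ) ≠ 0 := by exact_mod_cast hc
  rw [intervalIntegral.integral_comp_mul_left (fun x => Real.sin x) hc', integral_sin]
  have : Real.cos (c * (2 * π)) = 1 := Real.cos_int_mul_two_pi c
  simp [this]

lemma cos_int (c : ℤ) : IntervalIntegrable (fun θ : ℝ => Real.cos (c * θ)) volume 0 (2 * π) :=
  Continuous.intervalIntegrable (by fun_prop) _ _

lemma sin_int (c : ℤ) : IntervalIntegrable (fun θ : ℝ => Real.sin (c * θ)) volume 0 (2 * π) :=
  Continuous.intervalIntegrable (by fun_prop) _ _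

/-- combination of four cosines -/
lemma aux_cos4 (A B C D : ℝ) (p q r s : ℤ) (hp : p ≠ 0) (hq : q ≠ 0) (hr : r ≠ 0) (hs : s ≠ 0) :
    ∫ θ in (0:ℝ)..(2 * π), (A * Real.cos (p * θ) + B * Real.cos (q * θ)
      + (C * Real.cos (r * θ) + D * Real.cos (s * θ))) = 0 := by
  rw [intervalIntegral.integral_add, intervalIntegral.integral_add, intervalIntegral.integral_add]
  · simp only [intervalIntegral.integral_const_mul, aux_cos p hp, aux_cos q hq, aux_cos r hr,
      aux_cos s hs, mul_zero, add_zero]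
  all_goals exact Continuous.intervalIntegrable (by fun_prop) _ _

lemma aux_sin4 (A B C D : ℝ) (p q r s : ℤ) :
    ∫ θ in (0:ℝ)..(2 * π), (A * Real.sin (p * θ) + B * Real.sin (q * θ)
      + (C * Real.sin (r * θ) + D * Real.sin (s * θ))) = 0 := by
  rw [intervalIntegral.integral_add, intervalIntegral.integral_add, intervalIntegral.integral_add]
  · simp [intervalIntegral.integral_const_mul, aux_sin]
  all_goals exact Continuous.intervalIntegrable (by fun_prop) _ _

lemma circY_zero (k : ℕ) : ∃ c : ℝ, ∀ θ, circY k 0 θ = c * Real.cos (k * θ) := by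
  by_cases hk : k = 0
  · exact ⟨Real.sqrt 2 / 2, fun θ => by simp [circY, hk]⟩
  · exact ⟨1, fun θ => by simp [circY, hk]⟩

lemma circY_one (k : ℕ) (hk : k ≠ 0) (θ : ℝ) : circY k 1 θ = Real.sin (k * θ) := by
  simp [circY, hk]

lemma ang_mixed (k j : ℕ) (hj : j ≠ 0) :
    ∫ θ in (0:ℝ)..(2 * π), Real.cos θ * circY k 0 θ * circY j 1 θ = 0 := by
  obtain ⟨c, hc⟩ := circY_zero k
  refine Eq.trans ?_ (aux_sin4 (c/4) (c/4) (c/4) (c/4) (j + k + 1) (j + k - 1) (j - k + 1) (j - k - 1))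
  congr 1; ext θ
  rw [hc, circY_one j hj]
  push_cast
  simp only [add_mul, sub_mul, one_mul, Real.sin_add, Real.sin_sub, Real.cos_add, Real.cos_sub]
  ring

lemma ang_cc (k j : ℕ) (h1 : j ≠ k + 1) (h2 : k ≠ j + 1) :
    ∫ θ in (0:ℝ)..(2 * π), Real.cos θ * circY k 0 θ * circY j 0 θ = 0 := by
  obtain ⟨c, hc⟩ := circY_zero k
  obtain ⟨d, hd⟩ := circY_zero j
  refine Eq.trans ?_ (aux_cos4 (c*d/4) (c*d/4) (c*d/4) (c*d/4) (j + k + 1) (j + k - 1) (j - k + 1) (j - k - 1)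
    (by omega) (by omega) (by omega) (by omega))
  congr 1; ext θ
  rw [hc, hd]
  push_cast
  simp only [add_mul, sub_mul, one_mul, Real.sin_add, Real.sin_sub, Real.cos_add, Real.cos_sub]
  ring

lemma ang_ss (k j : ℕ) (hk : k ≠ 0) (hj : j ≠ 0) (h1 : j ≠ k + 1) (h2 : k ≠ j + 1) :
    ∫ θ in (0:ℝ)..(2 * π), Real.cos θ * circY k 1 θ * circY j 1 θ = 0 := by
  refine Eq.trans ?_ (aux_cos4 (-1/4) (-1/4) (1/4) (1/4) (j + k + 1) (j + k - 1) (j - k + 1) (j - k - 1)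
    (by omega) (by omega) (by omega) (by omega))
  congr 1; ext θ
  rw [circY_one k hk, circY_one j hj]
  push_cast
  simp only [add_mul, sub_mul, one_mul, Real.sin_add, Real.sin_sub, Real.cos_add, Real.cos_sub]
  ring

lemma ang_zero (k i j h : ℕ) (hi : i ≤ 1) (hi0 : k = 0 → i = 0) (hh : h ≤ 1) (hh0 : j = 0 → h = 0)
    (hc : h ≠ i ∨ (j ≠ k + 1 ∧ k ≠ j + 1)) :
    ∫ θ in (0:ℝ)..(2 * π), Real.cos θ * circY k i θ * circY j h θ = 0 := by
  interval_cases i <;> interval_cases h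
  · exact ang_cc k j (by omega) (by omega)
  · exact ang_mixed k j (by omega)
  · refine Eq.trans ?_ (ang_mixed j k (by omega))
    congr 1; ext θ; ring
  · exact ang_ss k j (by omega) (by omega) (by omega) (by omega)

lemma pow_combine (t : ℝ) (ht : 0 ≤ t) (k : ℕ) :
    Real.sqrt t * t ^ ((k : ℝ) / 2) * t ^ (((k + 1 : ℕ) : ℝ) / 2) = t ^ (k + 1) := by
  have e : ∀ k : ℕ, t ^ ((k : ℝ) / 2) = Real.sqrt t ^ k := fun k => by
    rw [Real.sqrt_eq_rpow, ← Real.rpow_natCast, ← Real.rpow_mul ht]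
    congr 1; ring
  rw [e, e]
  calc _ = (Real.sqrt t ^ 2) ^ (k + 1) := by ring
    _ = _ := by rw [Real.sq_sqrt ht]

/-- Radial integral vanishes. -/
lemma radial_zero (α a : ℝ) (hα : α ∈ Set.Ioo (-1 : ℝ) 1)
    (R : ℕ → ℕ → Polynomial ℝ)
    (hdeg : ∀ k l : ℕ, (R k l).degree = l)
    (horth : ∀ (k l : ℕ) (p : Polynomial ℝ), p.degree < (l : WithBot ℕ) →
      ∫ x in α..1, (R k l).eval x * p.eval x * (x - α) ^ a * (1 - x ^ 2) ^ k = 0)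
    (n k m : ℕ) (hkn : k ≤ n) (hjm : k + 1 ≤ m) (hc : n + 2 ≤ m ∨ m + 2 ≤ n) :
    ∫ z in α..1, (Real.sqrt (1 - z ^ 2) * (1 - z ^ 2) ^ ((k : ℝ) / 2)
      * (1 - z ^ 2) ^ (((k + 1 : ℕ) : ℝ) / 2)) *
      ((R k (n - k)).eval z * (R (k + 1) (m - (k + 1))).eval z * (z - α) ^ a) = 0 := by
  have step : ∫ z in α..1, (Real.sqrt (1 - z ^ 2) * (1 - z ^ 2) ^ ((k : ℝ) / 2)
      * (1 - z ^ 2) ^ (((k + 1 : ℕ) : ℝ) / 2)) *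
      ((R k (n - k)).eval z * (R (k + 1) (m - (k + 1))).eval z * (z - α) ^ a)
      = ∫ z in α..1, (1 - z ^ 2) ^ (k + 1) *
      ((R k (n - k)).eval z * (R (k + 1) (m - (k + 1))).eval z * (z - α) ^ a) := by
    apply intervalIntegral.integral_congr
    intro z hz
    rw [Set.uIcc_of_le hα.2.le] at hz
    have ht : 0 ≤ 1 - z ^ 2 := by nlinarith [hz.1, hz.2, hα.1]
    simp only [pow_combine _ ht k]
  rw [step]
  rcases hc with hc | hc
  · rw [← horth (k + 1) (m - (k + 1)) (R k (n - k)) (by rw [hdeg]; exact_mod_cast (by omega))]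
    congr 1; ext z; ring
  · have hd : (R (k + 1) (m - (k + 1)) * (1 - X ^ 2)).degree < ((n - k : ℕ) : WithBot ℕ) := by
      refine lt_of_le_of_lt (degree_mul_le _ _) ?_
      have h2 : (1 - X ^ 2 : ℝ[X]).degree ≤ (2 : ℕ) := by
        compute_degree
        exact le_rfl
      rw [hdeg]
      refine lt_of_le_of_lt (add_le_add_right h2 _) ?_
      exact_mod_cast (by omega)
    rw [← horth k (n - k) _ hd]
    congr 1; ext z
    simp only [eval_mul, eval_sub, eval_one, eval_pow, eval_X]
    ring

/-- Sparsity of the Jacobi operator for multiplication by x = ρ(z) cos θ on the spherical cap: the coupling integral vanishes unless h = i, j ∈ {k−1, k+1} and |m − n| ≤ 1. -/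
theorem sphericalCap_jacobiX_sparse (α a : ℝ) (hα : α ∈ Set.Ioo (-1 : ℝ) 1) (ha : 0 ≤ a)
    (R : ℕ → ℕ → Polynomial ℝ)
    (hdeg : ∀ k l : ℕ, (R k l).degree = l)
    (horth : ∀ (k l : ℕ) (p : Polynomial ℝ), p.degree < (l : WithBot ℕ) →
      ∫ x in α..1, (R k l).eval x * p.eval x * (x - α) ^ a * (1 - x ^ 2) ^ k = 0)
    (n k i m j h : ℕ) (hkn : k ≤ n) (hjm : j ≤ m)
    (hi : i ≤ 1) (hi0 : k = 0 → i = 0) (hh : h ≤ 1) (hh0 : j = 0 → h = 0)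
    (hcond : h ≠ i ∨ ((j : ℤ) ≠ (k : ℤ) - 1 ∧ (j : ℤ) ≠ (k : ℤ) + 1) ∨ 2 ≤ |(m : ℤ) - (n : ℤ)|) :
    ∫ z in α..1, ∫ θ in (0:ℝ)..(2 * π),
      Real.sqrt (1 - z ^ 2) * Real.cos θ *
      ((R k (n - k)).eval z * (1 - z ^ 2) ^ ((k : ℝ) / 2) * circY k i θ) *
      ((R j (m - j)).eval z * (1 - z ^ 2) ^ ((j : ℝ) / 2) * circY j h θ) *
      (z - α) ^ a = 0 := by
  have key : ∀ z : ℝ, (∫ θ in (0:ℝ)..(2 * π),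
      Real.sqrt (1 - z ^ 2) * Real.cos θ *
      ((R k (n - k)).eval z * (1 - z ^ 2) ^ ((k : ℝ) / 2) * circY k i θ) *
      ((R j (m - j)).eval z * (1 - z ^ 2) ^ ((j : ℝ) / 2) * circY j h θ) *
      (z - α) ^ a) = ((Real.sqrt (1 - z ^ 2) * (1 - z ^ 2) ^ ((k : ℝ) / 2)
      * (1 - z ^ 2) ^ ((j : ℝ) / 2)) *
      ((R k (n - k)).eval z * (R j (m - j)).eval z * (z - α) ^ a)) *
      ∫ θ in (0:ℝ)..(2 * π), Real.cos θ * circY k i θ * circY j h θ := by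
    intro z
    rw [← intervalIntegral.integral_const_mul]
    congr 1; ext θ; ring
  simp only [key]
  rw [intervalIntegral.integral_mul_const]
  by_cases hA : h ≠ i ∨ (j ≠ k + 1 ∧ k ≠ j + 1)
  · rw [ang_zero k i j h hi hi0 hh hh0 hA, mul_zero]
  · push Not at hA
    obtain ⟨hA1, hA2⟩ := hA
    have hmn : n + 2 ≤ m ∨ m + 2 ≤ n := by
      rcases hcond with h1 | h1 | h1
      · exact absurd hA1 h1
      · exfalso
        by_cases h3 : j = k + 1
        · exact h1.2 (by omega)
        · exact h1.1 (by have := hA2 h3; omega)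
      · rcases le_abs.1 h1 with h2 | h2 <;> omega
    by_cases h3 : j = k + 1
    · subst h3
      rw [radial_zero α a hα R hdeg horth n k m hkn hjm hmn, zero_mul]
    · have h4 := hA2 h3
      subst h4
      have := radial_zero α a hα R hdeg horth m j n hjm hkn hmn.symm
      rw [mul_eq_zero]; left
      rw [← this]
      congr 1; ext z; ring
end

section
/- Let α ∈ (−1,1) and a ≥ 0 be real. Suppose that for each nonnegative integer k, (R_{k,l})_{l≥0} is a sequence of real polynomials with deg R_{k,l} = l and ∫_α^1 R_{k,l}(z) p(z) (z−α)^a (1−z²)^k dz = 0 for every polynomial p with deg p < l. Define Q_{n,k,i}(θ,z) := R_{k,n−k}(z) · (1−z²)^{k/2} · Y_{k,i}(θ). Then for index triples (n,k,i) and (m,j,h) (with 0 ≤ k ≤ n, 0 ≤ j ≤ m and admissible i, h), if h ≠ 1 − i, or j ∉ {k−1, k+1}, or |m − n| ≥ 2, one has ∫_α^1 ∫_0^{2π} √(1−z²) sin θ · Q_{n,k,i}(θ,z) · Q_{m,j,h}(θ,z) · (z−α)^a dθ dz = 0. (This is the sparsity of the Jacobi operator for multiplication by y = ρ(z) sin θ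 on the spherical cap.) -/
open MeasureTheory Real Polynomial

lemma aux_cos_int (q : ℤ) (hq : q ≠ 0) : ∫ θ in (0:ℝ)..(2 * π), Real.cos (q * θ) = 0 := by
  have hq' : (q : ℝ) ≠ 0 := by exact_mod_cast hq
  rw [intervalIntegral.integral_comp_mul_left (fun x => Real.cos x) hq', integral_cos]
  have : Real.sin ((q : ℝ) * (2 * π)) = 0 := by
    have := Real.sin_int_mul_pi (q * 2)
    push_cast at this
    rw [← this]; ring_nf
  simp [this]

lemma aux_sin_refl (k : ℕ) (θ : ℝ) : Real.sin (k * (2 * π - θ)) = - Real.sin (k * θ) := by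
  rw [mul_sub]; exact Real.sin_nat_mul_two_pi_sub (k * θ) k

lemma aux_cos_refl (k : ℕ) (θ : ℝ) : Real.cos (k * (2 * π - θ)) = Real.cos (k * θ) := by
  rw [mul_sub]; exact Real.cos_nat_mul_two_pi_sub (k * θ) k

lemma aux_odd (f : ℝ → ℝ) (hf : ∀ θ, f (2 * π - θ) = - f θ) :
    ∫ θ in (0:ℝ)..(2 * π), f θ = 0 := by
  have h1 := intervalIntegral.integral_comp_sub_left (a := 0) (b := 2 * π) f (2 * π)
  simp only [hf, intervalIntegral.integral_neg, sub_self, sub_zero] at h1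
  linarith

lemma aux_T_mixed (k j : ℕ) (hj : j ≠ 0)
    (hjk : (j : ℤ) ≠ (k : ℤ) - 1 ∧ (j : ℤ) ≠ (k : ℤ) + 1) :
    ∫ θ in (0:ℝ)..(2 * π), Real.sin θ * circY k 0 θ * circY j 1 θ = 0 := by
  obtain ⟨c, hc⟩ : ∃ c : ℝ, ∀ θ, circY k 0 θ = c * Real.cos (k * θ) := by
    by_cases hk : k = 0
    · exact ⟨Real.sqrt 2 / 2, fun θ => by simp [circY, hk]⟩
    · exact ⟨1, fun θ => by simp [circY, hk]⟩
  have hs : ∀ θ, circY j 1 θ = Real.sin (j * θ) := fun θ => by simp [circY, hj]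
  have key : ∀ θ : ℝ, Real.sin θ * circY k 0 θ * circY j 1 θ =
      c / 4 * ((Real.cos (((j - 1 - k : ℤ) : ℝ) * θ) + Real.cos (((j - 1 + k : ℤ) : ℝ) * θ))
        - (Real.cos (((j + 1 - k : ℤ) : ℝ) * θ) + Real.cos (((j + 1 + k : ℤ) : ℝ) * θ))) := by
    intro θ
    rw [hc, hs]
    push_cast
    simp only [sub_mul, add_mul, one_mul, Real.cos_add, Real.cos_sub, Real.sin_add, Real.sin_sub]
    ring
  have hint : ∀ q : ℝ, IntervalIntegrable (fun θ : ℝ => Real.cos (q * θ)) volume 0 (2 * π) :=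
    fun q => (by fun_prop : Continuous fun θ : ℝ => Real.cos (q * θ)).intervalIntegrable _ _
  simp only [key]
  rw [intervalIntegral.integral_const_mul, intervalIntegral.integral_sub
    ((hint _).add (hint _)) ((hint _).add (hint _)), intervalIntegral.integral_add (hint _) (hint _),
    intervalIntegral.integral_add (hint _) (hint _), aux_cos_int _ (by omega),
    aux_cos_int _ (by omega), aux_cos_int _ (by omega), aux_cos_int _ (by omega)]
  simp

lemma aux_T (k i j h : ℕ)
    (hi : i ≤ 1) (hi0 : k = 0 → i = 0) (hh : h ≤ 1) (hh0 : j = 0 → h = 0)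
    (hcond : h ≠ 1 - i ∨ ((j : ℤ) ≠ (k : ℤ) - 1 ∧ (j : ℤ) ≠ (k : ℤ) + 1)) :
    ∫ θ in (0:ℝ)..(2 * π), Real.sin θ * circY k i θ * circY j h θ = 0 := by
  have e0 : ∀ (k : ℕ) (θ : ℝ), circY k 0 (2 * π - θ) = circY k 0 θ := by
    intro k θ
    simp [circY, aux_cos_refl]
  have e1 : ∀ (k : ℕ) (θ : ℝ), k ≠ 0 → circY k 1 (2 * π - θ) = - circY k 1 θ := by
    intro k θ hk
    simp [circY, aux_sin_refl, hk]
  by_cases hih : h = 1 - i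
  · have hc := hcond.resolve_left (by simpa using hih)
    rcases Nat.le_one_iff_eq_zero_or_eq_one.1 hi with rfl | rfl
    · obtain rfl : h = 1 := by omega
      exact aux_T_mixed k j (fun h => by simpa using hh0 h) hc
    · obtain rfl : h = 0 := by omega
      have := aux_T_mixed j k (fun h => by simpa using hi0 h) (by omega)
      rw [← this]
      congr 1; ext θ; ring
  · obtain rfl : h = i := by omega
    apply aux_odd
    intro θ
    rcases Nat.le_one_iff_eq_zero_or_eq_one.1 hi with rfl | rfl
    · rw [e0, e0, Real.sin_two_pi_sub]; ring
    · rw [e1 _ _ (fun h => by simpa using hi0 h), e1 _ _ (fun h => by simpa using hh0 h),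
        Real.sin_two_pi_sub]; ring

lemma aux_Z (α a : ℝ) (hα : α ∈ Set.Ioo (-1 : ℝ) 1)
    (R : ℕ → ℕ → Polynomial ℝ)
    (hdeg : ∀ k l : ℕ, (R k l).degree = l)
    (horth : ∀ (k l : ℕ) (p : Polynomial ℝ), p.degree < (l : WithBot ℕ) →
      ∫ x in α..1, (R k l).eval x * p.eval x * (x - α) ^ a * (1 - x ^ 2) ^ k = 0)
    (n k m : ℕ) (hkn : k ≤ n) (hjm : k + 1 ≤ m)
    (hmn : 2 ≤ |(m : ℤ) - (n : ℤ)|) :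
    ∫ z in α..1, Real.sqrt (1 - z ^ 2) *
      ((R k (n - k)).eval z * (1 - z ^ 2) ^ ((k : ℝ) / 2)) *
      ((R (k + 1) (m - (k + 1))).eval z * (1 - z ^ 2) ^ (((k + 1 : ℕ) : ℝ) / 2)) *
      (z - α) ^ a = 0 := by
  have e : ∫ z in α..1, Real.sqrt (1 - z ^ 2) *
      ((R k (n - k)).eval z * (1 - z ^ 2) ^ ((k : ℝ) / 2)) *
      ((R (k + 1) (m - (k + 1))).eval z * (1 - z ^ 2) ^ (((k + 1 : ℕ) : ℝ) / 2)) *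
      (z - α) ^ a = ∫ z in α..1, (R k (n - k)).eval z * (R (k + 1) (m - (k + 1))).eval z *
        (z - α) ^ a * (1 - z ^ 2) ^ (k + 1) := by
    apply intervalIntegral.integral_congr
    intro z hz
    rw [Set.uIcc_of_le hα.2.le] at hz
    have hpos : 0 ≤ 1 - z ^ 2 := by nlinarith [hz.1, hz.2, hα.1]
    have hp : ∀ k : ℕ, (1 - z ^ 2) ^ ((k : ℝ) / 2) = Real.sqrt (1 - z ^ 2) ^ k := by
      intro k
      rw [Real.sqrt_eq_rpow, ← Real.rpow_mul_natCast hpos]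
      congr 1; ring
    have hs : (1 - z ^ 2) ^ (k + 1) = (Real.sqrt (1 - z ^ 2) ^ (k + 1)) ^ 2 := by
      rw [← pow_mul, mul_comm, pow_mul, Real.sq_sqrt hpos]
    simp only [hp, hs]
    ring
  rw [e]
  rcases le_abs.1 hmn with h1 | h1
  · have := horth (k + 1) (m - (k + 1)) (R k (n - k)) (by
      rw [hdeg]; exact_mod_cast (by omega : n - k < m - (k + 1)))
    rw [← this]
    congr 1; ext z; ring
  · have := horth k (n - k) (R (k + 1) (m - (k + 1)) * (1 - X ^ 2)) (by
      have h2 : (1 - X ^ 2 : Polynomial ℝ).degree ≤ 2 := by compute_degree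
      calc _ ≤ _ := Polynomial.degree_mul_le _ _
        _ ≤ ((m - (k + 1) : ℕ) : WithBot ℕ) + 2 := by rw [hdeg]; gcongr
        _ < _ := by exact_mod_cast (by omega : m - (k + 1) + 2 < n - k))
    rw [← this]
    congr 1; ext z
    simp only [eval_mul, eval_sub, eval_one, eval_pow, eval_X]
    ring

/-- Sparsity of the Jacobi operator for multiplication by y = ρ(z) sin θ on the spherical cap: the coupling integral vanishes unless h = 1 − i, j ∈ {k−1, k+1} and |m − n| ≤ 1. -/
theorem sphericalCap_jacobiY_sparse (α a : ℝ) (hα : α ∈ Set.Ioo (-1 : ℝ) 1) (ha : 0 ≤ a)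
    (R : ℕ → ℕ → Polynomial ℝ)
    (hdeg : ∀ k l : ℕ, (R k l).degree = l)
    (horth : ∀ (k l : ℕ) (p : Polynomial ℝ), p.degree < (l : WithBot ℕ) →
      ∫ x in α..1, (R k l).eval x * p.eval x * (x - α) ^ a * (1 - x ^ 2) ^ k = 0)
    (n k i m j h : ℕ) (hkn : k ≤ n) (hjm : j ≤ m)
    (hi : i ≤ 1) (hi0 : k = 0 → i = 0) (hh : h ≤ 1) (hh0 : j = 0 → h = 0)
    (hcond : h ≠ 1 - i ∨ ((j : ℤ) ≠ (k : ℤ) - 1 ∧ (j : ℤ) ≠ (k : ℤ) + 1) ∨ 2 ≤ |(m : ℤ) - (n : ℤ)|) :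
    ∫ z in α..1, ∫ θ in (0:ℝ)..(2 * π),
      Real.sqrt (1 - z ^ 2) * Real.sin θ *
      ((R k (n - k)).eval z * (1 - z ^ 2) ^ ((k : ℝ) / 2) * circY k i θ) *
      ((R j (m - j)).eval z * (1 - z ^ 2) ^ ((j : ℝ) / 2) * circY j h θ) *
      (z - α) ^ a = 0 := by
  have e : ∀ z : ℝ, (∫ θ in (0:ℝ)..(2 * π),
      Real.sqrt (1 - z ^ 2) * Real.sin θ *
      ((R k (n - k)).eval z * (1 - z ^ 2) ^ ((k : ℝ) / 2) * circY k i θ) *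
      ((R j (m - j)).eval z * (1 - z ^ 2) ^ ((j : ℝ) / 2) * circY j h θ) *
      (z - α) ^ a) = (Real.sqrt (1 - z ^ 2) *
      ((R k (n - k)).eval z * (1 - z ^ 2) ^ ((k : ℝ) / 2)) *
      ((R j (m - j)).eval z * (1 - z ^ 2) ^ ((j : ℝ) / 2)) *
      (z - α) ^ a) * ∫ θ in (0:ℝ)..(2 * π), Real.sin θ * circY k i θ * circY j h θ := by
    intro z
    rw [← intervalIntegral.integral_const_mul]
    congr 1; ext θ; ring
  simp only [e]
  by_cases hT : h ≠ 1 - i ∨ ((j : ℤ) ≠ (k : ℤ) - 1 ∧ (j : ℤ) ≠ (k : ℤ) + 1)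
  · simp [aux_T k i j h hi hi0 hh hh0 hT]
  · have hmn : 2 ≤ |(m : ℤ) - (n : ℤ)| := by tauto
    have hjk : k = j + 1 ∨ j = k + 1 := by omega
    rw [intervalIntegral.integral_mul_const]
    rcases hjk with rfl | rfl
    · have := aux_Z α a hα R hdeg horth m j n hjm hkn (by rwa [abs_sub_comm])
      refine mul_eq_zero_of_left ?_ _
      rw [← this]
      congr 1; ext z; ring
    · rw [aux_Z α a hα R hdeg horth n k m hkn hjm hmn, zero_mul]
end

section
/- Let α ∈ (−1,1) and a ≥ 0 be real. Suppose that for each nonnegative integer k, (R_{k,l})_{l≥0} is a sequence of real polynomials with deg R_{k,l} = l and ∫_α^1 R_{k,l}(z) p(z) (z−α)^a (1−z²)^k dz = 0 for every polynomial p with deg p < l. Define Q_{n,k,i}(θ,z) := R_{k,n−k}(z) · (1−z²)^{k/2} · Y_{k,i}(θ). Then for index triples (n,k,i) and (m,j,h) (with 0 ≤ k ≤ n, 0 ≤ j ≤ m and admissible i, h), if h ≠ i, or j ≠ k, or |m − n| ≥ 2, one has ∫_α^1 ∫_0^{2π} z · Q_{n,k,i}(θ,z) · Q_{m,j,h}(θ,z)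 · (z−α)^a dθ dz = 0. (This is the three-term recurrence for multiplication by z on the spherical cap: different Fourier modes do not interact.) -/
open MeasureTheory Real Polynomial

lemma capAux_cos (p : ℤ) (hp : p ≠ 0) : ∫ θ in (0:ℝ)..(2 * π), Real.cos (p * θ) = 0 := by
  have hp' : (p : ℝ) ≠ 0 := by exact_mod_cast hp
  rw [intervalIntegral.integral_comp_mul_left (fun x => Real.cos x) hp', integral_cos]
  have : Real.sin ((p : ℝ) * (2 * π)) = 0 := by
    have := Real.sin_int_mul_pi (2 * p)
    rw [← this]; push_cast; ring_nf
  simp [this]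

lemma capAux_sin (p : ℤ) : ∫ θ in (0:ℝ)..(2 * π), Real.sin (p * θ) = 0 := by
  by_cases hp : p = 0
  · simp [hp]
  have hp' : (p : ℝ) ≠ 0 := by exact_mod_cast hp
  rw [intervalIntegral.integral_comp_mul_left (fun x => Real.sin x) hp', integral_sin]
  simp [Real.cos_int_mul_two_pi]

lemma capAux_combo (f : ℝ → ℝ) (u v : ℝ → ℝ) (c d : ℝ) (hu : Continuous u) (hv : Continuous v)
    (hf : ∀ x, f x = c * u x + d * v x) (h1 : ∫ θ in (0:ℝ)..(2 * π), u θ = 0)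
    (h2 : ∫ θ in (0:ℝ)..(2 * π), v θ = 0) : ∫ θ in (0:ℝ)..(2 * π), f θ = 0 := by
  have : f = fun x => c * u x + d * v x := funext hf
  rw [this, intervalIntegral.integral_add, intervalIntegral.integral_const_mul,
    intervalIntegral.integral_const_mul, h1, h2]
  · simp
  · exact (continuous_const.mul hu).intervalIntegrable _ _
  · exact (continuous_const.mul hv).intervalIntegrable _ _

lemma capAux_sc (p q : ℤ) :
    ∫ θ in (0:ℝ)..(2 * π), Real.sin (p * θ) * Real.cos (q * θ) = 0 := by
  refine capAux_combo _ (fun x => Real.sin (((p + q : ℤ) : ℝ) * x))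
    (fun x => Real.sin (((p - q : ℤ) : ℝ) * x)) (1/2) (1/2) (by fun_prop) (by fun_prop) ?_
    (capAux_sin _) (capAux_sin _)
  intro x
  push_cast
  rw [add_mul, sub_mul, Real.sin_add, Real.sin_sub]
  ring

lemma capAux_cc (p q : ℤ) (h1 : p + q ≠ 0) (h2 : p - q ≠ 0) :
    ∫ θ in (0:ℝ)..(2 * π), Real.cos (p * θ) * Real.cos (q * θ) = 0 := by
  refine capAux_combo _ (fun x => Real.cos (((p + q : ℤ) : ℝ) * x))
    (fun x => Real.cos (((p - q : ℤ) : ℝ) * x)) (1/2) (1/2) (by fun_prop) (by fun_prop) ?_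
    (capAux_cos _ h1) (capAux_cos _ h2)
  intro x
  push_cast
  rw [add_mul, sub_mul, Real.cos_add, Real.cos_sub]
  ring

lemma capAux_ss (p q : ℤ) (h1 : p + q ≠ 0) (h2 : p - q ≠ 0) :
    ∫ θ in (0:ℝ)..(2 * π), Real.sin (p * θ) * Real.sin (q * θ) = 0 := by
  refine capAux_combo _ (fun x => Real.cos (((p + q : ℤ) : ℝ) * x))
    (fun x => Real.cos (((p - q : ℤ) : ℝ) * x)) (-1/2) (1/2) (by fun_prop) (by fun_prop) ?_
    (capAux_cos _ h1) (capAux_cos _ h2)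
  intro x
  push_cast
  rw [add_mul, sub_mul, Real.cos_add, Real.cos_sub]
  ring

/-- `circY` as a constant times a cosine or a sine. -/
lemma capAux_form (k i : ℕ) (hi : i ≤ 1) (hi0 : k = 0 → i = 0) :
    ∃ c : ℝ, (i = 0 ∧ ∀ θ, circY k i θ = c * Real.cos ((k : ℤ) * θ)) ∨
      (i = 1 ∧ ∀ θ, circY k i θ = c * Real.sin ((k : ℤ) * θ)) := by
  by_cases hk : k = 0
  · exact ⟨Real.sqrt 2 / 2, Or.inl ⟨hi0 hk, fun θ => by simp [circY, hk]⟩⟩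
  · rcases Nat.le_one_iff_eq_zero_or_eq_one.1 hi with h | h
    · exact ⟨1, Or.inl ⟨h, fun θ => by simp [circY, hk, h]⟩⟩
    · exact ⟨1, Or.inr ⟨h, fun θ => by simp [circY, hk, h]⟩⟩

lemma capAux_ang (k i j h : ℕ) (hi : i ≤ 1) (hi0 : k = 0 → i = 0) (hh : h ≤ 1)
    (hh0 : j = 0 → h = 0) (hcond : h ≠ i ∨ j ≠ k) :
    ∫ θ in (0:ℝ)..(2 * π), circY k i θ * circY j h θ = 0 := by
  obtain ⟨c, hc⟩ := capAux_form k i hi hi0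
  obtain ⟨d, hd⟩ := capAux_form j h hh hh0
  have key : ∀ u v : ℝ → ℝ, (∀ θ, circY k i θ = c * u θ) → (∀ θ, circY j h θ = d * v θ) →
      (∫ θ in (0:ℝ)..(2 * π), u θ * v θ = 0) →
      ∫ θ in (0:ℝ)..(2 * π), circY k i θ * circY j h θ = 0 := by
    intro u v hu hv h0
    have : (fun θ => circY k i θ * circY j h θ) = fun θ => (c * d) * (u θ * v θ) := by
      funext θ; rw [hu, hv]; ring
    rw [this, intervalIntegral.integral_const_mul, h0, mul_zero]
  rcases hc with ⟨h1, hc⟩ | ⟨h1, hc⟩ <;> rcases hd with ⟨h2, hd⟩ | ⟨h2, hd⟩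
  · exact key _ _ hc hd (capAux_cc _ _ (by omega) (by omega))
  · refine key _ _ hc hd ?_
    refine Eq.trans ?_ (capAux_sc (j : ℤ) (k : ℤ))
    exact intervalIntegral.integral_congr fun x _ => by ring
  · exact key _ _ hc hd (capAux_sc _ _)
  · exact key _ _ hc hd (capAux_ss _ _ (by omega) (by omega))

/-- Sparsity of the Jacobi operator for multiplication by z on the spherical cap: different Fourier modes do not interact and the operator is tridiagonal in the degree. -/
theorem sphericalCap_jacobiZ_sparse (α a : ℝ) (hα : α ∈ Set.Ioo (-1 : ℝ) 1) (ha : 0 ≤ a)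
    (R : ℕ → ℕ → Polynomial ℝ)
    (hdeg : ∀ k l : ℕ, (R k l).degree = l)
    (horth : ∀ (k l : ℕ) (p : Polynomial ℝ), p.degree < (l : WithBot ℕ) →
      ∫ x in α..1, (R k l).eval x * p.eval x * (x - α) ^ a * (1 - x ^ 2) ^ k = 0)
    (n k i m j h : ℕ) (hkn : k ≤ n) (hjm : j ≤ m)
    (hi : i ≤ 1) (hi0 : k = 0 → i = 0) (hh : h ≤ 1) (hh0 : j = 0 → h = 0)
    (hcond : h ≠ i ∨ j ≠ k ∨ 2 ≤ |(m : ℤ) - (n : ℤ)|) :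
    ∫ z in α..1, ∫ θ in (0:ℝ)..(2 * π),
      z *
      ((R k (n - k)).eval z * (1 - z ^ 2) ^ ((k : ℝ) / 2) * circY k i θ) *
      ((R j (m - j)).eval z * (1 - z ^ 2) ^ ((j : ℝ) / 2) * circY j h θ) *
      (z - α) ^ a = 0 := by
  have hinner : ∀ z : ℝ, (∫ θ in (0:ℝ)..(2 * π),
      z *
      ((R k (n - k)).eval z * (1 - z ^ 2) ^ ((k : ℝ) / 2) * circY k i θ) *
      ((R j (m - j)).eval z * (1 - z ^ 2) ^ ((j : ℝ) / 2) * circY j h θ) *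
      (z - α) ^ a) = (z * ((R k (n - k)).eval z * (1 - z ^ 2) ^ ((k : ℝ) / 2)) *
      ((R j (m - j)).eval z * (1 - z ^ 2) ^ ((j : ℝ) / 2)) * (z - α) ^ a) *
      ∫ θ in (0:ℝ)..(2 * π), circY k i θ * circY j h θ := by
    intro z
    rw [← intervalIntegral.integral_const_mul]
    exact intervalIntegral.integral_congr fun x _ => by ring
  simp only [hinner]
  by_cases hc : h ≠ i ∨ j ≠ k
  · simp [capAux_ang k i j h hi hi0 hh hh0 hc]
  push Not at hc
  obtain ⟨rfl, rfl⟩ := hc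
  rw [intervalIntegral.integral_mul_const]
  have hrad : ∫ z in α..1, z * ((R j (n - j)).eval z * (1 - z ^ 2) ^ ((j : ℝ) / 2)) *
      ((R j (m - j)).eval z * (1 - z ^ 2) ^ ((j : ℝ) / 2)) * (z - α) ^ a = 0 := by
    have hpow : ∀ z ∈ Set.uIcc α 1,
        (1 - z ^ 2) ^ ((j : ℝ) / 2) * (1 - z ^ 2) ^ ((j : ℝ) / 2) = (1 - z ^ 2) ^ j := by
      intro z hz
      rw [Set.uIcc_of_le hα.2.le] at hz
      have h0 : 0 ≤ 1 - z ^ 2 := by nlinarith [hz.1, hz.2, hα.1]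
      rw [← Real.rpow_add_of_nonneg h0 (by positivity) (by positivity), add_halves,
        Real.rpow_natCast]
    have hdX : ∀ l : ℕ, (X * R j l).degree = ((l + 1 : ℕ) : WithBot ℕ) := by
      intro l
      rw [degree_mul, degree_X, hdeg, add_comm]; rfl
    have hmn : n + 2 ≤ m ∨ m + 2 ≤ n := by
      rcases hcond with h1 | h1 | h1
      · exact absurd rfl h1
      · exact absurd rfl h1
      · rcases le_abs.1 h1 with h1 | h1 <;> omega
    rcases hmn with hmn | hmn
    · rw [← horth j (m - j) (X * R j (n - j)) (by rw [hdX]; exact_mod_cast (by omega))]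
      refine intervalIntegral.integral_congr fun z hz => ?_
      simp only [eval_mul, eval_X]
      rw [← hpow z hz]; ring
    · rw [← horth j (n - j) (X * R j (m - j)) (by rw [hdX]; exact_mod_cast (by omega))]
      refine intervalIntegral.integral_congr fun z hz => ?_
      simp only [eval_mul, eval_X]
      rw [← hpow z hz]; ring
  rw [hrad, zero_mul]
end

section
/- Fix α ∈ (−1,1), a real number a ≥ 0 and an integer k ≥ 0. Let R be a real polynomial of degree n that is orthogonal of degree n for the weight (x−α)^a (1−x²)^k on (α,1). Then for every real polynomial q with deg q ≤ n − 2, ∫_α^1 R'(x) q'(x) (x−α)^{a+1} (1−x²)^{k+1} dx = 0. (Consequently, d/dx[(x−α)^{a+1}(1−x²)^{k+1} R'(x)] expanded against the weight (x−α)^a(1−x²)^k has nonzero coefficients only against orthogonal polynomials of degrees n−1, n, n+1.) -/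
open MeasureTheory Real Polynomial

/-- Integration-by-parts sparsity: if R is the degree-n orthogonal polynomial for the weight (x−α)^a (1−x²)^k on (α,1), then ∫ R′ q′ (x−α)^{a+1} (1−x²)^{k+1} = 0 for every polynomial q of degree at most n−2. -/
theorem sphericalCap_derivative_IBP (α a : ℝ) (hα : α ∈ Set.Ioo (-1 : ℝ) 1) (ha : 0 ≤ a) (k n : ℕ)
    (R : Polynomial ℝ) (hdeg : R.degree = n)
    (horth : ∀ p : Polynomial ℝ, p.degree < (n : WithBot ℕ) →
      ∫ x in α..1, R.eval x * p.eval x * (x - α) ^ a * (1 - x ^ 2) ^ k = 0)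
    (q : Polynomial ℝ) (hq : q.degree + 2 ≤ (n : WithBot ℕ)) :
    ∫ x in α..1, (derivative R).eval x * (derivative q).eval x *
      (x - α) ^ (a + 1) * (1 - x ^ 2) ^ (k + 1) = 0 := by
  obtain ⟨hα1, hα2⟩ := hα
  set p : Polynomial ℝ := derivative (derivative q) * ((X - C α) * (1 - X ^ 2))
    + derivative q * (C (a + 1) * (1 - X ^ 2) - C (2 * ((k : ℝ) + 1)) * (X * (X - C α))) with hp
  have hpdeg : p.degree < (n : WithBot ℕ) := by
    by_cases h0 : derivative q = 0
    · have : p = 0 := by rw [hp, h0]; simp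
      rw [this, degree_zero]
      exact WithBot.bot_lt_coe n
    have hq0 : q ≠ 0 := by
      rintro rfl
      simp at h0
    have hd0 : q.natDegree ≠ 0 := by
      intro h
      exact h0 (derivative_of_natDegree_zero h)
    have hn : q.natDegree + 2 ≤ n := by
      rw [degree_eq_natDegree hq0] at hq
      exact_mod_cast hq
    have h1 : (derivative q).natDegree ≤ q.natDegree - 1 := natDegree_derivative_le q
    have hA : (C (a + 1) * (1 - X ^ 2) - C (2 * ((k : ℝ) + 1)) * (X * (X - C α))).natDegree ≤ 2 := by
      compute_degree
    have hB : ((X - C α) * (1 - X ^ 2) : Polynomial ℝ).natDegree ≤ 3 := by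
      compute_degree
    have hnat : p.natDegree ≤ q.natDegree + 1 := by
      refine natDegree_add_le_of_degree_le ?_ ?_
      · by_cases h2 : derivative (derivative q) = 0
        · rw [h2]; simp
        have hd1 : (derivative q).natDegree ≠ 0 := by
          intro h
          exact h2 (derivative_of_natDegree_zero h)
        have h3 := natDegree_derivative_le (derivative q)
        refine natDegree_mul_le.trans ?_
        omega
      · refine natDegree_mul_le.trans ?_
        omega
    refine degree_le_natDegree.trans_lt ?_
    exact_mod_cast (by omega : p.natDegree < n)
  have hO := horth p hpdeg
  have hc0 : Continuous fun x : ℝ => (x - α) ^ a :=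
    (continuous_id.sub continuous_const).rpow_const fun x => Or.inr ha
  have hc1 : Continuous fun x : ℝ => (x - α) ^ (a + 1) :=
    (continuous_id.sub continuous_const).rpow_const fun x => Or.inr (by linarith)
  have hi0 : IntervalIntegrable
      (fun x => R.eval x * p.eval x * (x - α) ^ a * (1 - x ^ 2) ^ k) volume α 1 := by
    apply Continuous.intervalIntegrable
    have := R.continuous
    have := p.continuous
    fun_prop
  have hi1 : IntervalIntegrable
      (fun x => (derivative R).eval x * (derivative q).eval x *
      (x - α) ^ (a + 1) * (1 - x ^ 2) ^ (k + 1)) volume α 1 := by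
    apply Continuous.intervalIntegrable
    have := (derivative R).continuous
    have := (derivative q).continuous
    fun_prop
  have hder : ∀ x ∈ Set.uIcc α 1, HasDerivAt
      (fun x => R.eval x * (derivative q).eval x * (x - α) ^ (a + 1) * (1 - x ^ 2) ^ (k + 1))
      ((derivative R).eval x * (derivative q).eval x * (x - α) ^ (a + 1) * (1 - x ^ 2) ^ (k + 1)
        + R.eval x * p.eval x * (x - α) ^ a * (1 - x ^ 2) ^ k) x := by
    intro x hx
    rw [Set.uIcc_of_le hα2.le] at hx
    have hxα : 0 ≤ x - α := by linarith [hx.1]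
    have e1 : HasDerivAt (fun x : ℝ => (x - α) ^ (a + 1)) (1 * (a + 1) * (x - α) ^ (a + 1 - 1)) x :=
      ((hasDerivAt_id x).sub_const α).rpow_const (Or.inr (by linarith))
    have e2 := (((hasDerivAt_id x).pow 2).const_sub 1).pow (k + 1)
    have e := (((R.hasDerivAt x).mul ((derivative q).hasDerivAt x)).mul e1).mul e2
    refine e.congr_deriv ?_
    have hr : (x - α) ^ (a + 1) = (x - α) ^ a * (x - α) :=
      Real.rpow_add_one' hxα (by linarith)
    simp only [hp, Pi.mul_apply, Pi.pow_apply, id, add_sub_cancel_right, hr, eval_add, eval_mul,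
      eval_sub, eval_X, eval_C, eval_one, eval_pow]
    push_cast
    ring
  have key := intervalIntegral.integral_eq_sub_of_hasDerivAt hder (hi1.add hi0)
  rw [intervalIntegral.integral_add hi1 hi0, hO] at key
  have hz : (0 : ℝ) ^ (a + 1) = 0 := Real.zero_rpow (by linarith)
  simpa [hz] using key
end

section
/- Fix α ∈ (−1,1), a real number a ≥ 0 and an integer k ≥ 0. Let R be a real polynomial of degree n that is orthogonal of degree n for the weight (x−α)^a (1−x²)^k on (α,1). Then for every real polynomial S with deg S ≤ n − 3, ∫_α^1 S(x) · [k x R(x) − (1−x²) R'(x)] · (x−α)^{a+1} (1−x²)^k dx = 0. (This is the sparsity of the spherical derivative operator D_φ^{(a)}: the matrix taking coefficients in the parameter-a basis to coefficients of ρ ∂f/∂φ in the parameter-(a+1) basis is block-diagonal with sub-block bandwidths (2,4).) -/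
open MeasureTheory Real Polynomial

/-- Sparsity of the spherical derivative operator D_φ^{(a)}: the coupling of ρ ∂/∂φ applied to the degree-n orthogonal polynomial against polynomials of degree at most n−3 vanishes. -/
theorem sphericalCap_Dphi_sparse (α a : ℝ) (hα : α ∈ Set.Ioo (-1 : ℝ) 1) (ha : 0 ≤ a) (k n : ℕ)
    (R : Polynomial ℝ) (hdeg : R.degree = n)
    (horth : ∀ p : Polynomial ℝ, p.degree < (n : WithBot ℕ) →
      ∫ x in α..1, R.eval x * p.eval x * (x - α) ^ a * (1 - x ^ 2) ^ k = 0)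
    (S : Polynomial ℝ) (hS : S.degree + 3 ≤ (n : WithBot ℕ)) :
    ∫ x in α..1, S.eval x *
      ((k : ℝ) * x * R.eval x - (1 - x ^ 2) * (derivative R).eval x) *
      (x - α) ^ (a + 1) * (1 - x ^ 2) ^ k = 0 := by
  by_cases hS0 : S = 0
  · simp [hS0]
  have hm : S.natDegree + 3 ≤ n := by
    rw [degree_eq_natDegree hS0] at hS
    exact_mod_cast hS
  -- the polynomial produced by integrating by parts
  obtain ⟨p, hp⟩ : ∃ p : Polynomial ℝ, p = S * (C (k : ℝ) * X * (X - C α) + C (a + 1) * (1 - X ^ 2)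
      - C (2 * ((k : ℝ) + 1)) * X * (X - C α)) + derivative S * ((X - C α) * (1 - X ^ 2)) :=
    ⟨_, rfl⟩
  have hpdeg : p.degree < (n : WithBot ℕ) := by
    have h1 : p.natDegree ≤ S.natDegree + 2 := by
      rw [hp]
      refine natDegree_add_le_of_degree_le ?_ ?_
      · refine natDegree_mul_le_of_le le_rfl ?_
        compute_degree
      · by_cases h0 : S.natDegree = 0
        · rw [derivative_of_natDegree_zero h0]
          simp
        · have h2 : (derivative S).natDegree ≤ S.natDegree - 1 := natDegree_derivative_le S
          have h3 : ((X - C α) * (1 - X ^ 2) : Polynomial ℝ).natDegree ≤ 3 := by compute_degree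
          have h4 := natDegree_mul_le_of_le h2 h3
          omega
    refine lt_of_le_of_lt degree_le_natDegree ?_
    exact_mod_cast (by omega : p.natDegree < n)
  have hpe : ∀ x, p.eval x = S.eval x * ((k : ℝ) * x * (x - α) + (a + 1) * (1 - x ^ 2)
      - (2 * ((k : ℝ) + 1)) * x * (x - α)) + (derivative S).eval x * ((x - α) * (1 - x ^ 2)) := by
    intro x
    rw [hp]
    simp
  have hc0 : Continuous fun x : ℝ => (x - α) ^ a :=
    (continuous_id.sub continuous_const).rpow_const fun _ => Or.inr ha
  have hc1 : Continuous fun x : ℝ => (x - α) ^ (a + 1) :=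
    (continuous_id.sub continuous_const).rpow_const fun _ => Or.inr (by linarith)
  have hcR := R.continuous
  have hcS := S.continuous
  have hcp := p.continuous
  have hcR' := (derivative R).continuous
  have hcS' := (derivative S).continuous
  have hF : ∀ x : ℝ, HasDerivAt
      (fun x => S.eval x * R.eval x * (x - α) ^ (a + 1) * (1 - x ^ 2) ^ (k + 1))
      ((((derivative S).eval x * R.eval x + S.eval x * (derivative R).eval x) * (x - α) ^ (a + 1)
        + S.eval x * R.eval x * ((a + 1) * (x - α) ^ a)) * (1 - x ^ 2) ^ (k + 1)
        + S.eval x * R.eval x * (x - α) ^ (a + 1) *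
          (((k : ℝ) + 1) * (1 - x ^ 2) ^ k * (-(2 * x)))) x := by
    intro x
    have e1 : HasDerivAt (fun x : ℝ => (x - α) ^ (a + 1)) ((a + 1) * (x - α) ^ a) x := by
      have := ((hasDerivAt_id x).sub_const α).rpow_const (p := a + 1) (Or.inr (by linarith))
      simpa using this
    have e2 : HasDerivAt (fun x : ℝ => (1 - x ^ 2) ^ (k + 1))
        (((k : ℝ) + 1) * (1 - x ^ 2) ^ k * (-(2 * x))) x := by
      have := (((hasDerivAt_id x).pow 2).const_sub 1).pow (k + 1)
      refine HasDerivAt.congr_deriv (f := fun x : ℝ => (1 - x ^ 2) ^ (k + 1)) this ?_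
      simp
    exact (((S.hasDerivAt x).mul (R.hasDerivAt x)).mul e1).mul e2
  have hFTC := intervalIntegral.integral_eq_sub_of_hasDerivAt (a := α) (b := 1)
    (fun x _ => hF x) (Continuous.intervalIntegrable (by fun_prop) _ _)
  have hz : (0 : ℝ) ^ (a + 1) = 0 := Real.zero_rpow (by linarith)
  simp only [sub_self, hz, one_pow, ne_eq, Nat.add_eq_zero_iff, one_ne_zero, and_false,
    not_false_eq_true, zero_pow, mul_zero, zero_mul] at hFTC
  have key := intervalIntegral.integral_sub (μ := volume) (a := α) (b := 1)
    (f := fun x => R.eval x * p.eval x * (x - α) ^ a * (1 - x ^ 2) ^ k)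
    (g := fun x => (((derivative S).eval x * R.eval x + S.eval x * (derivative R).eval x)
        * (x - α) ^ (a + 1)
        + S.eval x * R.eval x * ((a + 1) * (x - α) ^ a)) * (1 - x ^ 2) ^ (k + 1)
        + S.eval x * R.eval x * (x - α) ^ (a + 1) *
          (((k : ℝ) + 1) * (1 - x ^ 2) ^ k * (-(2 * x))))
    (Continuous.intervalIntegrable (by fun_prop) _ _)
    (Continuous.intervalIntegrable (by fun_prop) _ _)
  rw [horth p hpdeg, hFTC, sub_zero] at key
  rw [← key]
  refine intervalIntegral.integral_congr fun x hx => ?_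
  rw [Set.uIcc_of_le hα.2.le] at hx
  have hr : (x - α) ^ (a + 1) = (x - α) ^ a * (x - α) :=
    Real.rpow_add_one' (sub_nonneg.2 hx.1) (by linarith)
  simp only [hpe, hr]
  ring
end

section
/- Fix α ∈ (−1,1), a real number a ≥ 1 and an integer k ≥ 0. Let R be a real polynomial of degree n that is orthogonal of degree n for the weight (x−α)^a (1−x²)^k on (α,1). Then for every real polynomial S with deg S ≤ n − 2, ∫_α^1 S(x) · [k x (x−α) R(x) − (x−α)(1−x²) R'(x) − a (1−x²) R(x)] · (x−α)^{a−1} (1−x²)^k dx = 0. (This is the sparsity of the weighted spherical derivative operator W_φ^{(a)}: the matrix taking coefficients of the weighted function to coefficients of ρ ∂/∂φ[(z−α)^a f] in the weighted parameter-(a−1) basis is block-diagonal with sub-block bandwidths (4,2).) -/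
open MeasureTheory Real Polynomial

/-- Sparsity of the weighted spherical derivative operator W_φ^{(a)}: the coupling of ρ ∂/∂φ[(z−α)^a f] against polynomials of degree at most n−2 in the parameter-(a−1) weight vanishes. -/
theorem sphericalCap_Wphi_sparse (α a : ℝ) (hα : α ∈ Set.Ioo (-1 : ℝ) 1) (ha : 1 ≤ a) (k n : ℕ)
    (R : Polynomial ℝ) (hdeg : R.degree = n)
    (horth : ∀ p : Polynomial ℝ, p.degree < (n : WithBot ℕ) →
      ∫ x in α..1, R.eval x * p.eval x * (x - α) ^ a * (1 - x ^ 2) ^ k = 0)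
    (S : Polynomial ℝ) (hS : S.degree + 2 ≤ (n : WithBot ℕ)) :
    ∫ x in α..1, S.eval x *
      ((k : ℝ) * x * (x - α) * R.eval x - (x - α) * (1 - x ^ 2) * (derivative R).eval x
        - a * (1 - x ^ 2) * R.eval x) *
      (x - α) ^ (a - 1) * (1 - x ^ 2) ^ k = 0 := by
  obtain ⟨hα1, hα2⟩ := hα
  set p : Polynomial ℝ := derivative S * (1 - X ^ 2) - C ((k : ℝ) + 2) * X * S with hp
  have hpdeg : p.degree < (n : WithBot ℕ) := by
    by_cases hS0 : S = 0
    · simp only [hp, hS0]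
      simp
    · rw [degree_eq_natDegree hS0] at hS
      have hSn : S.natDegree + 2 ≤ n := by exact_mod_cast hS
      have h1 : p.natDegree ≤ S.natDegree + 1 := by
        rw [hp]
        refine (natDegree_sub_le _ _).trans (max_le ?_ ?_)
        · by_cases h0 : S.natDegree = 0
          · rw [derivative_of_natDegree_zero h0]; simp
          · have h2 := natDegree_derivative_le S
            have h3 : (1 - X ^ 2 : Polynomial ℝ).natDegree ≤ 2 := by compute_degree
            have h4 := natDegree_mul_le (p := derivative S) (q := (1 - X ^ 2 : Polynomial ℝ))
            omega
        · have h3 : (C ((k : ℝ) + 2) * X : Polynomial ℝ).natDegree ≤ 1 := by compute_degree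
          have h4 := natDegree_mul_le (p := (C ((k : ℝ) + 2) * X : Polynomial ℝ)) (q := S)
          omega
      refine lt_of_le_of_lt degree_le_natDegree ?_
      have : p.natDegree < n := by omega
      exact_mod_cast this
  have hO := horth p hpdeg
  have hc1 : Continuous fun x : ℝ => (x - α) ^ (a - 1) :=
    (Real.continuous_rpow_const (by linarith)).comp (continuous_id.sub continuous_const)
  have hc0 : Continuous fun x : ℝ => (x - α) ^ a :=
    (Real.continuous_rpow_const (by linarith)).comp (continuous_id.sub continuous_const)
  let F : ℝ → ℝ := fun x => S.eval x * R.eval x * (x - α) ^ a * (1 - x ^ 2) ^ (k + 1)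
  let F' : ℝ → ℝ := fun x =>
    (((derivative S).eval x * R.eval x + S.eval x * (derivative R).eval x) * (x - α) ^ a
      + S.eval x * R.eval x * (a * (x - α) ^ (a - 1))) * (1 - x ^ 2) ^ (k + 1)
    + S.eval x * R.eval x * (x - α) ^ a * (((k : ℝ) + 1) * (1 - x ^ 2) ^ k * (-(2 * x)))
  have hF : ∀ x, HasDerivAt F (F' x) x := by
    intro x
    have e1 : HasDerivAt (fun x : ℝ => (x - α) ^ a) (a * (x - α) ^ (a - 1)) x := by
      have := ((hasDerivAt_id x).sub_const α).rpow_const (p := a) (Or.inr ha)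
      simpa using this
    have e2 : HasDerivAt (fun x : ℝ => (1 - x ^ 2) ^ (k + 1))
        (((k : ℝ) + 1) * (1 - x ^ 2) ^ k * (-(2 * x))) x := by
      have := (((hasDerivAt_id x).pow 2).const_sub 1).pow (k + 1)
      refine HasDerivAt.congr_deriv (f := fun x : ℝ => (1 - x ^ 2) ^ (k + 1)) this ?_
      simp
    exact (((S.hasDerivAt x).mul (R.hasDerivAt x)).mul e1).mul e2
  have hF'c : Continuous F' := by
    have := S.continuous
    have := R.continuous
    have := (derivative S).continuous
    have := (derivative R).continuous
    fun_prop
  have hI : ∫ x in α..1, F' x = 0 := by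
    rw [intervalIntegral.integral_eq_sub_of_hasDerivAt (fun x _ => hF x)
      (hF'c.intervalIntegrable _ _)]
    have : (0 : ℝ) ^ a = 0 := Real.zero_rpow (by linarith)
    simp [F, this]
  have hGc : Continuous fun x : ℝ =>
      R.eval x * p.eval x * (x - α) ^ a * (1 - x ^ 2) ^ k := by
    have := p.continuous
    have := R.continuous
    fun_prop
  have key : ∫ x in α..1, (R.eval x * p.eval x * (x - α) ^ a * (1 - x ^ 2) ^ k - F' x) = 0 := by
    rw [intervalIntegral.integral_sub (hGc.intervalIntegrable _ _)
      (hF'c.intervalIntegrable _ _), hO, hI, sub_zero]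
  rw [← key]
  refine intervalIntegral.integral_congr fun x hx => ?_
  rw [Set.uIcc_of_le hα2.le] at hx
  have hr : (x - α) ^ a = (x - α) * (x - α) ^ (a - 1) := by
    rw [← Real.rpow_one_add' (sub_nonneg.2 hx.1) (by linarith)]
    congr 1
    ring
  simp only [F', hp, hr, eval_sub, eval_mul, eval_add, eval_pow, eval_X, eval_one, eval_C]
  ring
end

section
/- Fix α ∈ (−1,1), a real number a ≥ 0, an integer ã ≥ 2 and an integer k ≥ 0. Let R be a real polynomial of degree n that is orthogonal of degree n for the weight (x−α)^a (1−x²)^k on (α,1). Then for every real polynomial S with deg S ≤ n − ã − 1, ∫_α^1 S(x) · (x−α)^{a+ã} · [ −k(k+1) (1−x²)^k R(x) + d/dx( (1−x²)^{k+1} R'(x) ) ] dx = 0. (This is the sparsity of the spherical Laplacian operator ℒ^{(a)→(a+ã)}: it is block-diagonal with sub-block bandwidths (0,4) for ã = 2.) -/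
open MeasureTheory Real Polynomial

lemma natDegree_sub_mul_derivative_le (α : ℝ) (S : Polynomial ℝ) (s : ℕ) (hs : S.natDegree ≤ s) :
    ((X - C α) * derivative S).natDegree ≤ s := by
  rcases Nat.eq_zero_or_pos S.natDegree with h | h
  · rw [derivative_of_natDegree_zero h]; simp
  · have h1 := natDegree_derivative_le S
    have h2 : ((X - C α) * derivative S).natDegree ≤ 1 + (S.natDegree - 1) :=
      natDegree_mul_le_of_le (natDegree_X_sub_C_le α) h1
    omega

/-- Sparsity of the spherical Laplacian operator ℒ^{(a)→(a+ã)}: the radial coupling of Δ_S applied to the degree-n orthogonal polynomial against polynomials of degree at most n−ã−1, with weight (x−α)^{a+ã}, vanishes. -/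
theorem sphericalCap_laplacian_sparse (α a : ℝ) (hα : α ∈ Set.Ioo (-1 : ℝ) 1) (ha : 0 ≤ a) (k n : ℕ) (atil : ℕ) (hatil : 2 ≤ atil)
    (R : Polynomial ℝ) (hdeg : R.degree = n)
    (horth : ∀ p : Polynomial ℝ, p.degree < (n : WithBot ℕ) →
      ∫ x in α..1, R.eval x * p.eval x * (x - α) ^ a * (1 - x ^ 2) ^ k = 0)
    (S : Polynomial ℝ) (hS : S.degree + ((atil : WithBot ℕ) + 1) ≤ (n : WithBot ℕ)) :
    ∫ x in α..1, S.eval x * (x - α) ^ (a + (atil : ℝ)) *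
      (-((k : ℝ) * ((k : ℝ) + 1)) * (1 - x ^ 2) ^ k * R.eval x
        + (derivative ((1 - Polynomial.X ^ 2) ^ (k + 1) * derivative R)).eval x) = 0 := by
  rcases eq_or_ne S 0 with h0 | h0
  · simp [h0]
  obtain ⟨m, rfl⟩ : ∃ m, atil = m + 2 := ⟨atil - 2, by omega⟩
  rw [degree_eq_natDegree h0] at hS
  have hS' : S.natDegree + (m + 2 + 1) ≤ n := by exact_mod_cast hS
  clear hS
  obtain ⟨s, hs⟩ : ∃ s, s = S.natDegree := ⟨_, rfl⟩
  rw [← hs] at hS'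
  set b : ℝ := a + ((m + 2 : ℕ) : ℝ) with hb
  have hbm : b = a + m + 2 := by rw [hb]; push_cast; ring
  have hm0 : (0 : ℝ) ≤ m := Nat.cast_nonneg m
  obtain ⟨T, hT⟩ : ∃ T, T = (X - C α) * derivative S + C b * S := ⟨_, rfl⟩
  obtain ⟨U, hU⟩ : ∃ U, U = (1 - X ^ 2) * ((X - C α) * derivative T + C (b - 1) * T)
      - C (2 * ((k : ℝ) + 1)) * X * (X - C α) * T := ⟨_, rfl⟩
  obtain ⟨p, hp⟩ : ∃ p, p = C (-((k : ℝ) * ((k : ℝ) + 1))) * S * (X - C α) ^ (m + 2)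
      + (X - C α) ^ m * U := ⟨_, rfl⟩
  have dX : (X - C α).natDegree ≤ 1 := natDegree_X_sub_C_le α
  have dC : ∀ (c : ℝ) (q : Polynomial ℝ) (d : ℕ), q.natDegree ≤ d → (C c * q).natDegree ≤ d :=
    fun c q d h => (natDegree_C_mul_le c q).trans h
  have dT : T.natDegree ≤ s := by
    rw [hT]
    exact natDegree_add_le_of_degree_le (natDegree_sub_mul_derivative_le α S s hs.ge)
      (dC _ _ _ hs.ge)
  have d1 : ((1 : Polynomial ℝ) - X ^ 2).natDegree ≤ 2 := by compute_degree
  have dU : U.natDegree ≤ 2 + s := by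
    rw [hU]
    refine (natDegree_sub_le_of_le (m := 2 + s) (n := 2 + s) ?_ ?_).trans (by simp)
    · exact natDegree_mul_le_of_le d1 (natDegree_add_le_of_degree_le
        (natDegree_sub_mul_derivative_le α T s dT) (dC _ _ _ dT))
    · refine natDegree_mul_le_of_le (m := 2) ?_ dT
      exact natDegree_mul_le_of_le (m := 1) (n := 1) (dC _ _ _ natDegree_X_le) dX
  have dp : p.natDegree ≤ s + (m + 2) := by
    rw [hp]
    refine natDegree_add_le_of_degree_le ?_ ?_
    · refine natDegree_mul_le_of_le (dC _ _ _ hs.ge) ?_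
      simpa using natDegree_pow_le_of_le (m + 2) dX
    · have := natDegree_mul_le_of_le (natDegree_pow_le_of_le m dX) dU
      omega
  have hpn : p.degree < (n : WithBot ℕ) := by
    refine lt_of_le_of_lt degree_le_natDegree ?_
    exact_mod_cast (show p.natDegree < n by omega)
  have key := horth p hpn
  obtain ⟨A, hA⟩ : ∃ A, A = S * ((1 - X ^ 2) ^ (k + 1) * derivative R) := ⟨_, rfl⟩
  obtain ⟨B, hB⟩ : ∃ B, B = T * ((1 - X ^ 2) ^ (k + 1) * R) := ⟨_, rfl⟩
  have cr : ∀ c : ℝ, 0 ≤ c → Continuous fun x : ℝ => (x - α) ^ c := fun c hc =>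
    (continuous_id.sub continuous_const).rpow_const fun _ => Or.inr hc
  have hder : ∀ c : ℝ, 1 ≤ c → ∀ x : ℝ,
      HasDerivAt (fun x : ℝ => (x - α) ^ c) (c * (x - α) ^ (c - 1)) x := fun c hc x => by
    simpa using ((hasDerivAt_id x).sub_const α).rpow_const (p := c) (Or.inr hc)
  have c0 := cr a ha
  have cb := cr b (by linarith)
  have cb1 := cr (b - 1) (by linarith)
  have cb2 := cr (b - 1 - 1) (by linarith)
  obtain ⟨G, hG⟩ : ∃ G : ℝ → ℝ, G = fun x =>
    (b * (x - α) ^ (b - 1) * A.eval x + (x - α) ^ b * (derivative A).eval x)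
    - ((b - 1) * (x - α) ^ (b - 1 - 1) * B.eval x + (x - α) ^ (b - 1) * (derivative B).eval x) :=
    ⟨_, rfl⟩
  have cG : Continuous G := by rw [hG]; fun_prop
  have hGint : ∫ x in α..1, G x = 0 := by
    rw [intervalIntegral.integral_eq_sub_of_hasDerivAt
      (f := fun x => (x - α) ^ b * A.eval x - (x - α) ^ (b - 1) * B.eval x)
      (fun x _ => ?_) (cG.intervalIntegrable _ _)]
    · have e1 : (0 : ℝ) ^ b = 0 := Real.zero_rpow (by linarith)
      have e2 : (0 : ℝ) ^ (b - 1) = 0 := Real.zero_rpow (by linarith)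
      simp [hA, hB, e1, e2]
    · rw [hG]
      exact ((hder b (by linarith) x).mul (A.hasDerivAt x)).sub
        ((hder (b - 1) (by linarith) x).mul (B.hasDerivAt x))
  have hsum : ∫ x in α..1, (G x + R.eval x * p.eval x * (x - α) ^ a * (1 - x ^ 2) ^ k) = 0 := by
    rw [intervalIntegral.integral_add (cG.intervalIntegrable _ _), hGint, key, add_zero]
    exact Continuous.intervalIntegrable (by fun_prop) _ _
  rw [← hsum]
  refine intervalIntegral.integral_congr fun x hx => ?_
  rw [Set.uIcc_of_le hα.2.le] at hx
  have hy : 0 ≤ x - α := by linarith [hx.1]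
  have r : ∀ j : ℕ, (x - α) ^ (a + (j : ℝ)) = (x - α) ^ a * (x - α) ^ j := fun j => by
    rw [Real.rpow_add_of_nonneg hy ha (Nat.cast_nonneg j), Real.rpow_natCast]
  have r0 : (x - α) ^ b = (x - α) ^ a * (x - α) ^ (m + 2) := r (m + 2)
  have r1 : (x - α) ^ (b - 1) = (x - α) ^ a * (x - α) ^ (m + 1) := by
    rw [← r]; congr 1; rw [hbm]; push_cast; ring
  have r2 : (x - α) ^ (b - 1 - 1) = (x - α) ^ a * (x - α) ^ m := by
    rw [← r]; congr 1; rw [hbm]; ring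
  have hTx : T.eval x = (x - α) * (derivative S).eval x + b * S.eval x := by simp [hT]
  simp only [hG, r0, r1, r2, hA, hB, hp, hU, derivative_mul, derivative_pow, derivative_sub,
    derivative_one, derivative_X, eval_add, eval_sub, eval_mul, eval_pow, eval_X, eval_C,
    eval_one, eval_natCast, Nat.cast_add, Nat.cast_one, Nat.add_sub_cancel, eval_zero, map_add, map_mul, map_natCast, map_one]
  generalize (derivative T).eval x = T'
  rw [hTx]
  generalize (x - α) ^ a = w
  push_cast
  ring
end

section
/- Fix α ∈ (−1,1), a real number a ≥ 2 and an integer k ≥ 0. Let R be a real polynomial of degree n that is orthogonal of degree n for the weight (x−α)^a (1−x²)^k on (α,1). Then for every real polynomial S with deg S ≤ n − 1, ∫_α^1 S(x) (x−α)^{a−2} (1−x²)^k { R(x)·[−k(k+1)(x−α)² − 2a(k+1)x(x−α) + a(a−1)(1−x²)] + R'(x)·[−2(k+1)x(x−α)² + 2a(x−α)(1−x²)] + R''(x)·(x−α)²(1−x²) } dx = 0. (This is the sparsity of the weighted spherical Laplacian operator ℒ_W^{(a)→(a−ã)}: it is block-diagonal with sub-block bandwidths (4,0).) -/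
open MeasureTheory Real Polynomial

lemma degree_X_mul_derivative_le_aux (q : Polynomial ℝ) :
    (X * derivative q).degree ≤ q.degree := by
  rw [Polynomial.degree_le_iff_coeff_zero]
  intro m hm
  cases m with
  | zero => simp
  | succ m =>
    rw [coeff_X_mul, coeff_derivative, coeff_eq_zero_of_degree_lt hm, zero_mul]

lemma degree_op_le_aux (S : Polynomial ℝ) (b c : ℝ) :
    ((1 - X ^ 2) * derivative (derivative S) - C b * (X * derivative S) - C c * S).degree
      ≤ S.degree := by
  have h1 := degree_X_mul_derivative_le_aux S
  have h2 := (degree_X_mul_derivative_le_aux (X * derivative S)).trans h1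
  have h3 : (derivative (derivative S)).degree ≤ S.degree :=
    (degree_derivative_le).trans degree_derivative_le
  have e : (1 - X ^ 2) * derivative (derivative S) - C b * (X * derivative S) - C c * S
      = derivative (derivative S) - X * derivative (X * derivative S)
        + C (1 - b) * (X * derivative S) - C c * S := by
    simp only [derivative_mul, derivative_X, C_sub, C_1]
    ring
  rw [← mem_degreeLE] at *
  rw [e, ← smul_eq_C_mul, ← smul_eq_C_mul]
  have h0 : S ∈ degreeLE ℝ S.degree := mem_degreeLE.2 le_rfl
  exact sub_mem (add_mem (sub_mem h3 h2) (Submodule.smul_mem _ _ h1)) (Submodule.smul_mem _ _ h0)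

/-- Sparsity of the weighted spherical Laplacian operator ℒ_W^{(a)→(a−ã)}: the radial coupling of Δ_S[(z−α)^a · f] against polynomials of degree at most n−1 vanishes. -/
theorem sphericalCap_weighted_laplacian_sparse (α a : ℝ) (hα : α ∈ Set.Ioo (-1 : ℝ) 1) (ha : 2 ≤ a) (k n : ℕ)
    (R : Polynomial ℝ) (hdeg : R.degree = n)
    (horth : ∀ p : Polynomial ℝ, p.degree < (n : WithBot ℕ) →
      ∫ x in α..1, R.eval x * p.eval x * (x - α) ^ a * (1 - x ^ 2) ^ k = 0)
    (S : Polynomial ℝ) (hS : S.degree + 1 ≤ (n : WithBot ℕ)) :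
    ∫ x in α..1, S.eval x * (x - α) ^ (a - 2) * (1 - x ^ 2) ^ k *
      (R.eval x * (-((k : ℝ) * ((k : ℝ) + 1)) * (x - α) ^ 2
          - 2 * a * ((k : ℝ) + 1) * x * (x - α) + a * (a - 1) * (1 - x ^ 2))
        + (derivative R).eval x * (-(2 * ((k : ℝ) + 1)) * x * (x - α) ^ 2
          + 2 * a * (x - α) * (1 - x ^ 2))
        + (derivative (derivative R)).eval x * (x - α) ^ 2 * (1 - x ^ 2)) = 0 := by
  obtain ⟨h1, h2⟩ := hα
  set p : Polynomial ℝ := (1 - X ^ 2) * derivative (derivative S)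
    - C (2 * ((k : ℝ) + 1)) * (X * derivative S) - C ((k : ℝ) * ((k : ℝ) + 1)) * S with hp
  have hSn : S.degree < (n : WithBot ℕ) := by
    by_cases h : S = 0
    · subst h
      simp only [degree_zero]
      exact WithBot.bot_lt_coe n
    · rw [degree_eq_natDegree h] at hS ⊢
      have : S.natDegree + 1 ≤ n := by exact_mod_cast hS
      exact_mod_cast this
  have hpn : p.degree < (n : WithBot ℕ) := (degree_op_le_aux S _ _).trans_lt hSn
  have ho := horth p hpn
  have c0 : Continuous fun x : ℝ => (x - α) ^ (a - 2) :=
    (continuous_id.sub continuous_const).rpow_const fun _ => Or.inr (by linarith)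
  have c1 : Continuous fun x : ℝ => (x - α) ^ (a - 1) :=
    (continuous_id.sub continuous_const).rpow_const fun _ => Or.inr (by linarith)
  have c2 : Continuous fun x : ℝ => (x - α) ^ a :=
    (continuous_id.sub continuous_const).rpow_const fun _ => Or.inr (by linarith)
  refine Eq.trans (sub_eq_zero.1 ?_) ho
  rw [← intervalIntegral.integral_sub (Continuous.intervalIntegrable (by fun_prop) _ _)
    (Continuous.intervalIntegrable (by fun_prop) _ _)]
  let F : ℝ → ℝ := fun x => (1 - x ^ 2) ^ (k + 1) *
    (S.eval x * (a * (x - α) ^ (a - 1) * R.eval x + (x - α) ^ a * (derivative R).eval x)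
      - (derivative S).eval x * ((x - α) ^ a * R.eval x))
  have hF : Continuous F := by fun_prop
  rw [intervalIntegral.integral_eq_sub_of_hasDerivAt_of_le (f := F) h2.le hF.continuousOn]
  · have : a ≠ 0 := by linarith
    have h' : a - 1 ≠ 0 := by linarith
    simp [F, Real.zero_rpow this, Real.zero_rpow h']
  · intro x hx
    have hx0 : 0 < x - α := sub_pos.2 hx.1
    have d0 : HasDerivAt (fun x : ℝ => x - α) 1 x := (hasDerivAt_id x).sub_const α
    have d1 := d0.rpow_const (p := a - 1) (Or.inl hx0.ne')
    have d2 := d0.rpow_const (p := a) (Or.inl hx0.ne')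
    have dw := (((hasDerivAt_id x).pow 2).const_sub 1).pow (k + 1)
    have hd := dw.mul (((S.hasDerivAt x).mul (((d1.const_mul a).mul (R.hasDerivAt x)).add
      (d2.mul ((derivative R).hasDerivAt x)))).sub
      (((derivative S).hasDerivAt x).mul (d2.mul (R.hasDerivAt x))))
    refine hd.congr_deriv ?_
    have e2 : (x - α) ^ a = (x - α) ^ (a - 2) * (x - α) ^ 2 := by
      rw [← Real.rpow_natCast, ← Real.rpow_add hx0]; congr 1; push_cast; ring
    have e1 : (x - α) ^ (a - 1) = (x - α) ^ (a - 2) * (x - α) := by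
      nth_rewrite 3 [← Real.rpow_one (x - α)]
      rw [← Real.rpow_add hx0]; congr 1; ring
    have e0 : a - 1 - 1 = a - 2 := by ring
    simp only [hp, e0, e1, e2, id, Pi.pow_apply, Pi.mul_apply, Pi.add_apply, Pi.sub_apply,
      eval_sub, eval_mul, eval_C, eval_X, eval_pow, eval_one, Nat.add_sub_cancel, pow_succ,
      Nat.cast_add, Nat.cast_one]
    simp
    ring
  · exact Continuous.intervalIntegrable (by fun_prop) _ _
end

section
/- Fix α ∈ (−1,1) and an integer k ≥ 0, and let (R_l)_{l≥0} be real polynomials with deg R_l = l such that ∫_α^1 R_l(z) p(z) (z−α)(1−z²)^k dz = 0 for every polynomial p with deg p < l. Then for all nonnegative integers n, m with |n − m| ≥ 2, ∫_α^1 { R_n(z) R_m(z) · [k(k+1)(z−α) + 2(k+1)z] · (z−α)(1−z²)^k + R_n'(z) R_m'(z) · (z−α)² (1−z²)^{k+1} } dz = 0. (This is the sparsity of the weighted spherical Laplacian operator Δ_W^{(1)}: it is block-diagonal with sub-block bandwidths (2,2), i.e. block-tridiagonal in the degree within each Fourier mode.) -/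
open MeasureTheory Real Polynomial

theorem capAux_natDegree (p q : Polynomial ℝ) (d : ℕ) (hq : q.natDegree ≤ d + 1) :
    (derivative p * q).natDegree ≤ p.natDegree + d := by
  by_cases h : p.natDegree = 0
  · rw [Polynomial.eq_C_of_natDegree_eq_zero h]
    simp
  · have h1 := Polynomial.natDegree_derivative_lt h
    have h2 := Polynomial.natDegree_mul_le (p := derivative p) (q := q)
    omega

theorem capAux_natDegree2 (p q : Polynomial ℝ) (d : ℕ) (hq : q.natDegree ≤ d + 2) :
    (derivative (derivative p) * q).natDegree ≤ p.natDegree + d := by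
  by_cases h : p.natDegree = 0
  · rw [Polynomial.eq_C_of_natDegree_eq_zero h]
    simp
  · have h1 := Polynomial.natDegree_derivative_lt h
    have h2 := capAux_natDegree (derivative p) q (d + 1) hq
    omega

theorem capAux (α : ℝ) (k : ℕ)
    (R : ℕ → Polynomial ℝ) (hdeg : ∀ l : ℕ, (R l).degree = l)
    (horth : ∀ (l : ℕ) (p : Polynomial ℝ), p.degree < (l : WithBot ℕ) →
      ∫ z in α..1, (R l).eval z * p.eval z * (z - α) * (1 - z ^ 2) ^ k = 0)
    (n m : ℕ) (hnm : m + 2 ≤ n) :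
    ∫ z in α..1,
      ((R n).eval z * (R m).eval z *
          ((k : ℝ) * ((k : ℝ) + 1) * (z - α) + 2 * ((k : ℝ) + 1) * z) *
          (z - α) * (1 - z ^ 2) ^ k
        + (derivative (R n)).eval z * (derivative (R m)).eval z *
          (z - α) ^ 2 * (1 - z ^ 2) ^ (k + 1)) = 0 := by
  set F : Polynomial ℝ :=
    R n * derivative (R m) * (X - C α) ^ 2 * (1 - X ^ 2) ^ (k + 1) with hF
  set A : Polynomial ℝ := C ((k : ℝ) * (k + 1)) * (X - C α) + C (2 * ((k : ℝ) + 1)) * X with hA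
  set B : Polynomial ℝ := (X - C α) * (1 - X ^ 2) with hB
  set D : Polynomial ℝ :=
    C 2 * (1 - X ^ 2) - C (2 * ((k : ℝ) + 1)) * X * (X - C α) with hD
  set P : Polynomial ℝ :=
    R m * A - derivative (derivative (R m)) * B - derivative (R m) * D with hP
  have hm : (R m).natDegree = m := Polynomial.natDegree_eq_of_degree_eq_some (hdeg m)
  have hA1 : A.natDegree ≤ 1 := by rw [hA]; compute_degree
  have hB1 : B.natDegree ≤ 1 + 2 := by rw [hB]; compute_degree
  have hD1 : D.natDegree ≤ 1 + 1 := by rw [hD]; compute_degree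
  have hPd : P.natDegree ≤ m + 1 := by
    have e1 := Polynomial.natDegree_mul_le (p := R m) (q := A)
    have e2 := capAux_natDegree2 (R m) B 1 hB1
    have e3 := capAux_natDegree (R m) D 1 hD1
    rw [hm] at e1 e2 e3
    have e4 := Polynomial.natDegree_sub_le (R m * A) (derivative (derivative (R m)) * B)
    have e5 := Polynomial.natDegree_sub_le
      (R m * A - derivative (derivative (R m)) * B) (derivative (R m) * D)
    rw [hP]
    omega
  have hPn : P.degree < (n : WithBot ℕ) := by
    refine lt_of_le_of_lt Polynomial.degree_le_natDegree ?_
    exact_mod_cast (by omega : P.natDegree < n)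
  have hI := horth n P hPn
  have hJ : ∫ z in α..1, (derivative F).eval z = F.eval 1 - F.eval α :=
    intervalIntegral.integral_eq_sub_of_hasDerivAt (fun x _ => F.hasDerivAt x)
      ((derivative F).continuous.intervalIntegrable _ _)
  have hJ0 : ∫ z in α..1, (derivative F).eval z = 0 := by
    rw [hJ, hF]; simp
  have hsum : ∫ z in α..1, ((derivative F).eval z +
      (R n).eval z * P.eval z * (z - α) * (1 - z ^ 2) ^ k) = 0 := by
    rw [intervalIntegral.integral_add, hJ0, hI, add_zero]
    · exact (derivative F).continuous.intervalIntegrable _ _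
    · exact Continuous.intervalIntegrable (by fun_prop) _ _
  rw [← hsum]
  congr 1
  funext z
  simp only [hF, hP, hA, hB, hD, derivative_mul, derivative_pow, derivative_sub, derivative_one,
    derivative_X, derivative_C, eval_add, eval_sub, eval_mul, eval_pow, eval_X, eval_C, eval_one,
    eval_natCast, eval_zero, Nat.add_sub_cancel]
  push_cast
  ring

/-- Sparsity of the weighted spherical Laplacian operator Δ_W^{(1)}: within each Fourier
mode k it is block-tridiagonal in the degree, i.e. the coupling integral between the
degree-n and degree-m orthogonal polynomials for the weight (z−α)(1−z²)^k vanishes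
whenever |n − m| ≥ 2. -/
theorem sphericalCap_DeltaW1_sparse (α : ℝ) (hα : α ∈ Set.Ioo (-1 : ℝ) 1) (k : ℕ)
    (R : ℕ → Polynomial ℝ) (hdeg : ∀ l : ℕ, (R l).degree = l)
    (horth : ∀ (l : ℕ) (p : Polynomial ℝ), p.degree < (l : WithBot ℕ) →
      ∫ z in α..1, (R l).eval z * p.eval z * (z - α) * (1 - z ^ 2) ^ k = 0)
    (n m : ℕ) (hnm : 2 ≤ |(n : ℤ) - (m : ℤ)|) :
    ∫ z in α..1,
      ((R n).eval z * (R m).eval z *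
          ((k : ℝ) * ((k : ℝ) + 1) * (z - α) + 2 * ((k : ℝ) + 1) * z) *
          (z - α) * (1 - z ^ 2) ^ k
        + (derivative (R n)).eval z * (derivative (R m)).eval z *
          (z - α) ^ 2 * (1 - z ^ 2) ^ (k + 1)) = 0 := by
  rcases (by rcases le_abs.mp hnm with h | h <;> omega : m + 2 ≤ n ∨ n + 2 ≤ m) with h | h
  · exact capAux α k R hdeg horth n m h
  · rw [← capAux α k R hdeg horth m n h]
    congr 1
    funext z
    ring
end
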